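/- First-order bound for product softmax probabilities: fix a global state s ∈ S and a direction ν = (ν_1,…,ν_N) with ν_n ∈ ℝ^{S_n×A_n}. Then the directional derivatives of the product softmax probabilities satisfy Σ_{a∈A} |⟨∇_θ π_θ(a|s), ν⟩| ≤ 2N·‖ν‖₂, and for each fixed a the directional derivative equals π_θ(a|s)·Σ_{n=1}^N ( ν_n(s_n, a_n) − Σ_{a'_n∈A_n} π_{θ_n}(a'_n|s_n)·ν_n(s_n, a'_n) ). -/

import Mathlib

/-!
With `Z` the sum of the exponentiated parameters, each softmax probability is `exp (θ s a - log Z)`,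
so its logarithmic derivative along `ν` is `ν s a` minus the policy average of `ν s`: a deviation
from a mean, at most `2 * ‖ν‖₂` in absolute value. Logarithmic derivatives of the factors of a
product add up, so the joint probability has logarithmic derivative at most `2 * N * ‖ν‖₂`;
averaging this bound over the joint policy, whose probabilities sum to one, gives the claim.
-/

open Finset MeasureTheory
open scoped BigOperators Classical

noncomputable section

/-- Softmax policy with parameter `θ`. -/
def softmaxPol {S A : Type*} [Fintype A] (θ : S → A → ℝ) (s : S) (a : A) : ℝ :=
  Real.exp (θ s a) / ∑ a' : A, Real.exp (θ s a')

/-- Global product softmax policy. -/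
def gPolicy {N : ℕ} {S A : Fin N → Type*} [∀ n, Fintype (A n)]
    (θ : ∀ n, S n → A n → ℝ) (s : ∀ n, S n) (a : ∀ n, A n) : ℝ :=
  ∏ n, softmaxPol (θ n) (s n) (a n)

/-- Global product transition kernel. -/
def gKernel {N : ℕ} {S A : Fin N → Type*} (P : ∀ n, S n → A n → S n → ℝ)
    (s : ∀ n, S n) (a : ∀ n, A n) (s' : ∀ n, S n) : ℝ :=
  ∏ n, P n (s n) (a n) (s' n)

/-- Distribution of the state at time `t` under kernel `K`, policy `p`,
initial state distribution `ρ`. -/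
def stateDist {GS GA : Type*} [Fintype GS] [Fintype GA]
    (K : GS → GA → GS → ℝ) (p : GS → GA → ℝ) (ρ : GS → ℝ) : ℕ → GS → ℝ
  | 0 => ρ
  | t + 1 => fun s' => ∑ s : GS, ∑ a : GA, stateDist K p ρ t s * p s a * K s a s'

/-- Expected reward at time `t`. -/
def expReward {GS GA : Type*} [Fintype GS] [Fintype GA]
    (K : GS → GA → GS → ℝ) (p : GS → GA → ℝ) (R : GS → GA → ℝ) (ρ : GS → ℝ) (t : ℕ) : ℝ :=
  ∑ s : GS, ∑ a : GA, stateDist K p ρ t s * p s a * R s a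

/-- Expected discounted reward with initial state distribution `ρ`:
`V^p(ρ) = E[∑_t γ^t R(s(t),a(t)) | s(0) ∼ ρ]`. -/
def valueD {GS GA : Type*} [Fintype GS] [Fintype GA] (γ : ℝ)
    (K : GS → GA → GS → ℝ) (p : GS → GA → ℝ) (R : GS → GA → ℝ) (ρ : GS → ℝ) : ℝ :=
  ∑' t : ℕ, γ ^ t * expReward K p R ρ t

/-- Point mass at `s0`. -/
def diracD {GS : Type*} (s0 : GS) : GS → ℝ := fun s => if s = s0 then 1 else 0

/-- State value function `V^p(s)`. -/
def valueV {GS GA : Type*} [Fintype GS] [Fintype GA] (γ : ℝ)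
    (K : GS → GA → GS → ℝ) (p : GS → GA → ℝ) (R : GS → GA → ℝ) (s0 : GS) : ℝ :=
  valueD γ K p R (diracD s0)

/-- State-action value function `Q^p(s,a) = R(s,a) + γ E_{s' ∼ K(⬝|s,a)}[V^p(s')]`. -/
def valueQ {GS GA : Type*} [Fintype GS] [Fintype GA] (γ : ℝ)
    (K : GS → GA → GS → ℝ) (p : GS → GA → ℝ) (R : GS → GA → ℝ) (s0 : GS) (a0 : GA) : ℝ :=
  R s0 a0 + γ * ∑ s' : GS, K s0 a0 s' * valueV γ K p R s'

/-- Discounted state occupancy measure `d_ρ^p(s)`. -/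
def occup {GS GA : Type*} [Fintype GS] [Fintype GA] (γ : ℝ)
    (K : GS → GA → GS → ℝ) (p : GS → GA → ℝ) (ρ : GS → ℝ) (s : GS) : ℝ :=
  (1 - γ) * ∑' t : ℕ, γ ^ t * stateDist K p ρ t s

/-- Deterministic policy associated with an action-selection map. -/
def detPol {GS GA : Type*} (f : GS → GA) : GS → GA → ℝ :=
  fun s a => if a = f s then 1 else 0

/-- Squared Euclidean norm of a multi-agent parameter vector. -/
def sqNorm {N : ℕ} {S A : Fin N → Type*} [∀ n, Fintype (S n)] [∀ n, Fintype (A n)]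
    (ν : ∀ n, S n → A n → ℝ) : ℝ :=
  ∑ n, ∑ s, ∑ a, (ν n s a) ^ 2

/-- Euclidean norm of a multi-agent parameter vector. -/
def eucNorm {N : ℕ} {S A : Fin N → Type*} [∀ n, Fintype (S n)] [∀ n, Fintype (A n)]
    (ν : ∀ n, S n → A n → ℝ) : ℝ :=
  Real.sqrt (sqNorm ν)

end

section Simplex

theorem prod_mem_stdSimplex {𝕜 ι : Type*} [CommSemiring 𝕜] [PartialOrder 𝕜] [IsOrderedRing 𝕜]
    [Fintype ι] [DecidableEq ι] {A : ι → Type*} [∀ i, Fintype (A i)] {p : ∀ i, A i → 𝕜}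
    (hp : ∀ i, p i ∈ stdSimplex 𝕜 (A i)) :
    (fun a : ∀ i, A i => ∏ i, p i (a i)) ∈ stdSimplex 𝕜 (∀ i, A i) := by
  refine ⟨fun a => Finset.prod_nonneg fun i _ => (hp i).1 (a i), ?_⟩
  calc ∑ a : ∀ i, A i, ∏ i, p i (a i) = ∏ i, ∑ b, p i b := (Fintype.prod_sum p).symm
    _ = 1 := Finset.prod_eq_one fun i _ => (hp i).2

theorem norm_sub_sum_smul_le {ι E : Type*} [Fintype ι] [SeminormedAddCommGroup E] [NormedSpace ℝ E]
    {w : ι → ℝ} (hw : w ∈ stdSimplex ℝ ι) {u : ι → E} {C : ℝ} (hu : ∀ i, ‖u i‖ ≤ C) (i : ι) :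
    ‖u i - ∑ j, w j • u j‖ ≤ 2 * C := by
  have hmean : ∑ j, w j • u j ∈ Metric.closedBall (0 : E) C :=
    (convex_closedBall 0 C).sum_mem (fun j _ => hw.1 j) hw.2
      fun j _ => mem_closedBall_zero_iff.2 (hu j)
  exact (norm_sub_le_of_le (hu i) (mem_closedBall_zero_iff.1 hmean)).trans_eq (two_mul C).symm

end Simplex

theorem hasFDerivAt_finsetProd_of_smul {𝕜 E ι : Type*} [NontriviallyNormedField 𝕜]
    [NormedAddCommGroup E] [NormedSpace 𝕜 E] {t : Finset ι} {f : ι → E → 𝕜} {g : ι → E →L[𝕜] 𝕜}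
    {x : E} (hf : ∀ i ∈ t, HasFDerivAt (f i) (f i x • g i) x) :
    HasFDerivAt (fun y => ∏ i ∈ t, f i y) ((∏ i ∈ t, f i x) • ∑ i ∈ t, g i) x := by
  refine (HasFDerivAt.finsetProd hf).congr_fderiv ?_
  rw [Finset.smul_sum]
  refine Finset.sum_congr rfl fun i hi => ?_
  rw [smul_smul, Finset.prod_erase_mul t (fun j => f j x) hi]

section Softmax

variable {S A : Type*} [Fintype A]

theorem sum_exp_pos [Nonempty A] (u : A → ℝ) : 0 < ∑ a, Real.exp (u a) :=
  Finset.sum_pos (fun a _ => Real.exp_pos (u a)) Finset.univ_nonempty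

theorem softmaxPol_mem_stdSimplex [Nonempty A] (θ : S → A → ℝ) (s : S) :
    softmaxPol θ s ∈ stdSimplex ℝ A := by
  refine ⟨fun a => div_nonneg (Real.exp_nonneg _) (sum_exp_pos (θ s)).le, ?_⟩
  simp only [softmaxPol, ← Finset.sum_div]
  exact div_self (sum_exp_pos (θ s)).ne'

theorem softmaxPol_eq_exp_sub_log (θ : S → A → ℝ) (s : S) (a : A) :
    softmaxPol θ s a = Real.exp (θ s a - Real.log (∑ b, Real.exp (θ s b))) := by
  have : Nonempty A := ⟨a⟩
  rw [softmaxPol, Real.exp_sub, Real.exp_log (sum_exp_pos (θ s))]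

variable {E : Type*} [NormedAddCommGroup E] [NormedSpace ℝ E]

theorem hasFDerivAt_log_sum_exp [Nonempty A] {u : A → E → ℝ} {u' : A → E →L[ℝ] ℝ} {x : E}
    (hu : ∀ b, HasFDerivAt (u b) (u' b) x) :
    HasFDerivAt (fun y => Real.log (∑ b, Real.exp (u b y)))
      (∑ b, (Real.exp (u b x) / ∑ c, Real.exp (u c x)) • u' b) x := by
  have hsum : HasFDerivAt (fun y => ∑ b, Real.exp (u b y)) (∑ b, Real.exp (u b x) • u' b) x :=
    HasFDerivAt.fun_sum fun b _ => (hu b).exp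
  refine (hsum.log (sum_exp_pos fun b => u b x).ne').congr_fderiv ?_
  simp only [Finset.smul_sum, smul_smul, div_eq_inv_mul]

theorem hasFDerivAt_softmaxPol {θ : E → S → A → ℝ} {s : S} {θ' : A → E →L[ℝ] ℝ} {x : E}
    (hθ : ∀ b, HasFDerivAt (fun y => θ y s b) (θ' b) x) (a : A) :
    HasFDerivAt (fun y => softmaxPol (θ y) s a)
      (softmaxPol (θ x) s a • (θ' a - ∑ b, softmaxPol (θ x) s b • θ' b)) x := by
  have : Nonempty A := ⟨a⟩
  have hexp := ((hθ a).fun_sub (hasFDerivAt_log_sum_exp hθ)).exp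
  simp only [← softmaxPol_eq_exp_sub_log] at hexp
  exact hexp

end Softmax

section ProductPolicy

variable {N : ℕ} {S A : Fin N → Type*} [∀ n, Fintype (A n)]

theorem gPolicy_mem_stdSimplex [∀ n, Nonempty (A n)] (θ : ∀ n, S n → A n → ℝ) (s : ∀ n, S n) :
    gPolicy θ s ∈ stdSimplex ℝ (∀ n, A n) :=
  prod_mem_stdSimplex fun n => softmaxPol_mem_stdSimplex (θ n) (s n)

theorem hasFDerivAt_gPolicy {E : Type*} [NormedAddCommGroup E] [NormedSpace ℝ E]
    {θ : E → ∀ n, S n → A n → ℝ} {s : ∀ n, S n} {θ' : ∀ n, A n → E →L[ℝ] ℝ} {x : E}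
    (hθ : ∀ n b, HasFDerivAt (fun y => θ y n (s n) b) (θ' n b) x) (a : ∀ n, A n) :
    HasFDerivAt (fun y => gPolicy (θ y) s a)
      (gPolicy (θ x) s a •
        ∑ n, (θ' n (a n) - ∑ b, softmaxPol (θ x n) (s n) b • θ' n b)) x :=
  hasFDerivAt_finsetProd_of_smul fun n _ =>
    hasFDerivAt_softmaxPol (θ := fun y => θ y n) (hθ n) (a n)

theorem fderiv_gPolicy_apply [∀ n, Finite (S n)] (θ ν : ∀ n, S n → A n → ℝ)
    (s : ∀ n, S n) (a : ∀ n, A n) :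
    fderiv ℝ (fun θ' : ∀ n, S n → A n → ℝ => gPolicy θ' s a) θ ν
      = gPolicy θ s a *
          ∑ n, (ν n (s n) (a n) - ∑ b, softmaxPol (θ n) (s n) b * ν n (s n) b) := by
  have (n : Fin N) : Fintype (S n) := Fintype.ofFinite (S n)
  let eval (n : Fin N) (b : A n) : (∀ n, S n → A n → ℝ) →L[ℝ] ℝ :=
    .proj (φ := fun _ : A n => ℝ) b ∘L .proj (φ := fun _ : S n => A n → ℝ) (s n) ∘L .proj n
  have hderiv := hasFDerivAt_gPolicy (θ := id) (fun n b => (eval n b).hasFDerivAt (x := θ)) a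
  have heval (n : Fin N) (b : A n) : eval n b ν = ν n (s n) b := rfl
  simpa [heval] using DFunLike.congr_fun hderiv.fderiv ν

variable [∀ n, Fintype (S n)]

theorem abs_le_eucNorm (ν : ∀ n, S n → A n → ℝ) (n : Fin N) (s : S n) (a : A n) :
    |ν n s a| ≤ eucNorm ν := by
  refine Real.abs_le_sqrt ?_
  calc ν n s a ^ 2
    _ ≤ ∑ b, ν n s b ^ 2 :=
        Finset.single_le_sum (f := fun b => ν n s b ^ 2) (fun _ _ => by positivity)
          (Finset.mem_univ a)
    _ ≤ ∑ t, ∑ b, ν n t b ^ 2 :=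
        Finset.single_le_sum (f := fun t => ∑ b, ν n t b ^ 2) (fun _ _ => by positivity)
          (Finset.mem_univ s)
    _ ≤ sqNorm ν :=
        Finset.single_le_sum (f := fun m => ∑ t, ∑ b, ν m t b ^ 2) (fun _ _ => by positivity)
          (Finset.mem_univ n)

theorem abs_sum_sub_sum_softmaxPol_mul_le (θ ν : ∀ n, S n → A n → ℝ) (s : ∀ n, S n)
    (a : ∀ n, A n) :
    |∑ n, (ν n (s n) (a n) - ∑ b, softmaxPol (θ n) (s n) b * ν n (s n) b)|
      ≤ 2 * N * eucNorm ν := by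
  have hagent (n : Fin N) :
      |ν n (s n) (a n) - ∑ b, softmaxPol (θ n) (s n) b * ν n (s n) b| ≤ 2 * eucNorm ν :=
    have : Nonempty (A n) := ⟨a n⟩
    norm_sub_sum_smul_le (u := ν n (s n)) (softmaxPol_mem_stdSimplex (θ n) (s n))
      (fun b => abs_le_eucNorm ν n (s n) b) (a n)
  calc _ ≤ ∑ n, |ν n (s n) (a n) - ∑ b, softmaxPol (θ n) (s n) b * ν n (s n) b| :=
        Finset.abs_sum_le_sum_abs _ _
    _ ≤ ∑ _n : Fin N, 2 * eucNorm ν := Finset.sum_le_sum fun n _ => hagent n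
    _ = 2 * N * eucNorm ν := by
        rw [Fin.sum_const, nsmul_eq_mul]
        ring

end ProductPolicy

/-- First-order bound for product softmax probabilities: the
directional derivative of `θ ↦ π_θ(a|s)` in direction `ν` equals
`π_θ(a|s)·Σ_n (ν_n(s_n,a_n) − Σ_{a'} π_{θ_n}(a'|s_n) ν_n(s_n,a'))`, and the sum of its
absolute values over all global actions is at most `2N‖ν‖₂`. -/
theorem softmax_first_order_bound
    {N : ℕ} (hN : 1 ≤ N)
    {S A : Fin N → Type*}
    [∀ n, Fintype (S n)] [∀ n, Nonempty (S n)]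
    [∀ n, Fintype (A n)] [∀ n, Nonempty (A n)]
    (θ ν : ∀ n, S n → A n → ℝ) (s : ∀ k, S k) :
    (∀ a : ∀ k, A k,
      fderiv ℝ (fun θ' : ∀ n, S n → A n → ℝ => gPolicy θ' s a) θ ν
        = gPolicy θ s a *
            ∑ n, (ν n (s n) (a n) -
              ∑ a' : A n, softmaxPol (θ n) (s n) a' * ν n (s n) a')) ∧
    ∑ a : ∀ k, A k,
        |fderiv ℝ (fun θ' : ∀ n, S n → A n → ℝ => gPolicy θ' s a) θ ν|
      ≤ 2 * (N : ℝ) * eucNorm ν := by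
  refine ⟨fderiv_gPolicy_apply θ ν s, ?_⟩
  obtain ⟨hnonneg, hsum⟩ := gPolicy_mem_stdSimplex θ s
  calc ∑ a, |fderiv ℝ (fun θ' : ∀ n, S n → A n → ℝ => gPolicy θ' s a) θ ν|
    _ = ∑ a, gPolicy θ s a *
          |∑ n, (ν n (s n) (a n) - ∑ b, softmaxPol (θ n) (s n) b * ν n (s n) b)| := by
        simp only [fderiv_gPolicy_apply, abs_mul, abs_of_nonneg (hnonneg _)]
    _ ≤ 2 * N * eucNorm ν :=
        (convex_Iic (𝕜 := ℝ) _).sum_mem (fun a _ => hnonneg a) hsum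
          fun a _ => Set.mem_Iic.2 (abs_sum_sub_sum_softmaxPol_mul_le θ ν s a)
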